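/- arXiv:0811.1328 — 3 statements merged into one kernel-verified Lean document; each statement's English description precedes it below -/
import Mathlib

section
/- Let Q be a finite quiver without loops, and let Δ be an admissible cut of Q. Suppose Q contains, as a full subquiver, a quiver G of the following shape (for some integers a, b ≥ 2): pairwise distinct vertices v_1, v_2, …, v_{a+1} and v'_2, …, v'_b, arrows v_i → v_{i+1} for i = 1, …, a (the upper path), arrows v_1 → v'_2, v'_j → v'_{j+1} for j = 2, …, b−1, and v'_b → v_{a+1} (the lower path), one further arrow η: v_{a+1} → v_1, and no other arrows between these vertices. Then either η belongs to Δ and no arrow of the upper or lower path belongs to Δ, or η does not belong to Δ and Δ contains exactly one arrow of the upper path and exactly one arrow of the lower path. -/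
/-- The set of arrows of the full subquiver of the quiver with arrows `A`,
source map `s` and target map `t`, on the vertex set `S`. -/
def fullArrows {V A : Type*} [Fintype A] [DecidableEq V] (s t : A → V) (S : Finset V) :
    Finset A :=
  Finset.univ.filter fun a => s a ∈ S ∧ t a ∈ S

/-- Two vertices are joined by an arrow (in either direction) of the full subquiver on `S`. -/
def adjOn {V A : Type*} [Fintype A] [DecidableEq V] (s t : A → V) (S : Finset V)
    (u v : V) : Prop :=
  ∃ a ∈ fullArrows s t S, (s a = u ∧ t a = v) ∨ (s a = v ∧ t a = u)

/-- The vertex set `S` carries a chordless cycle: the full subquiver on `S` is nonempty,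
connected, and exactly two of its arrows are incident (as source or target) to each of
its vertices. -/
def IsChordlessCycle {V A : Type*} [Fintype A] [DecidableEq V] (s t : A → V)
    (S : Finset V) : Prop :=
  S.Nonempty ∧
  (∀ u ∈ S, ∀ v ∈ S, Relation.ReflTransGen (adjOn s t S) u v) ∧
  ∀ v ∈ S, ((fullArrows s t S).filter fun a => s a = v ∨ t a = v).card = 2

/-- The chordless cycle on `S` is oriented: at each vertex exactly one incident arrow
starts there and exactly one ends there. -/
def IsOrientedChordlessCycle {V A : Type*} [Fintype A] [DecidableEq V] (s t : A → V)
    (S : Finset V) : Prop :=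
  IsChordlessCycle s t S ∧
  ∀ v ∈ S, ((fullArrows s t S).filter fun a => s a = v).card = 1 ∧
    ((fullArrows s t S).filter fun a => t a = v).card = 1

/-- An admissible cut: a set of arrows containing exactly one arrow of each oriented
chordless cycle of the quiver. -/
def IsAdmissibleCut {V A : Type*} [Fintype A] [DecidableEq V] [DecidableEq A]
    (s t : A → V) (Δ : Finset A) : Prop :=
  ∀ S : Finset V, IsOrientedChordlessCycle s t S →
    ((fullArrows s t S).filter fun a => a ∈ Δ).card = 1

/-- `IsPathFrom s t x y l` : the list of arrows `l` is a path from `x` to `y` in the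
quiver with source map `s` and target map `t`. -/
inductive IsPathFrom {V A : Type*} (s t : A → V) : V → V → List A → Prop
  | nil (v : V) : IsPathFrom s t v v []
  | cons {u w : V} {a : A} {l : List A} (h1 : s a = u) (h2 : IsPathFrom s t (t a) w l) :
      IsPathFrom s t u w (a :: l)

/-!
Each of the two paths of `G(a,b)`, closed up by `η`, is an oriented chordless cycle: the source map
and the target map both restrict to bijections from its arrows to its vertices, and no arrow of the
other path is a chord, since by `a, b ≥ 2` each such arrow has an inner vertex of that other path as
an end point. So the cut contains exactly one arrow of each of the two cycles. As `η` is the arrow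
they share, it is either the cut arrow of both cycles or of neither.
-/

section FinsetLemmas

variable {α β ι : Type*}

lemma card_filter_eq_one_of_bijOn [DecidableEq β] {f : α → β} {F : Finset α} {S : Finset β}
    (hf : Set.BijOn f F S) {b : β} (hb : b ∈ S) : (F.filter fun a => f a = b).card = 1 := by
  obtain ⟨a, ha, rfl⟩ := hf.surjOn hb
  refine Finset.card_eq_one_iff_existsUnique.2 ⟨a, Finset.mem_filter.2 ⟨ha, rfl⟩, fun a' ha' => ?_⟩
  obtain ⟨ha'F, haa'⟩ := Finset.mem_filter.1 ha'
  exact hf.injOn ha'F ha haa'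

lemma card_filter_mem_insert_image_eq_one_iff [DecidableEq α] {P : Finset ι} {p : ι → α} {c : α}
    (hp : Set.InjOn p P) (hc : c ∉ P.image p) (Δ : Finset α) :
    ((insert c (P.image p)).filter fun a => a ∈ Δ).card = 1 ↔
      (c ∈ Δ ∧ ∀ i ∈ P, p i ∉ Δ) ∨ (c ∉ Δ ∧ (P.filter fun i => p i ∈ Δ).card = 1) := by
  have hcard : ((P.image p).filter fun a => a ∈ Δ).card = (P.filter fun i => p i ∈ Δ).card := by
    rw [Finset.filter_image, Finset.card_image_of_injOn]
    exact hp.mono (Finset.coe_subset.2 (Finset.filter_subset _ P))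
  have hc' : c ∉ (P.image p).filter fun a => a ∈ Δ := fun h => hc (Finset.mem_filter.1 h).1
  by_cases hcΔ : c ∈ Δ
  · simp [Finset.filter_insert, hcΔ, Finset.card_insert_of_notMem hc', hcard,
      Finset.filter_eq_empty_iff]
  · simp [Finset.filter_insert, hcΔ, hcard]

end FinsetLemmas

section OrientedChordlessCycle

variable {V A : Type*} [DecidableEq V] [Fintype A] {s t : A → V} {S T : Finset V}

lemma mem_fullArrows {e : A} : e ∈ fullArrows s t S ↔ s e ∈ S ∧ t e ∈ S := by
  simp [fullArrows]

lemma fullArrows_mono (h : S ⊆ T) : fullArrows s t S ⊆ fullArrows s t T := fun _ he =>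
  mem_fullArrows.2 ((mem_fullArrows.1 he).imp (@h _) (@h _))

instance adjOn_symm : Std.Symm (adjOn s t S) :=
  ⟨fun _ _ ⟨e, he, h⟩ => ⟨e, he, h.symm⟩⟩

lemma isOrientedChordlessCycle_of_bijOn {r : V} (hr : r ∈ S)
    (hreach : ∀ u ∈ S, Relation.ReflTransGen (adjOn s t S) r u)
    (hs : Set.BijOn s (fullArrows s t S) S) (ht : Set.BijOn t (fullArrows s t S) S)
    (hloop : ∀ e ∈ fullArrows s t S, s e ≠ t e) : IsOrientedChordlessCycle s t S := by
  refine ⟨⟨⟨r, hr⟩, fun u hu v hv => (symm (hreach u hu)).trans (hreach v hv), fun v hv => ?_⟩,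
    fun v hv => ⟨card_filter_eq_one_of_bijOn hs hv, card_filter_eq_one_of_bijOn ht hv⟩⟩
  have hdisj : Disjoint ((fullArrows s t S).filter fun e => s e = v)
      ((fullArrows s t S).filter fun e => t e = v) :=
    Finset.disjoint_filter.2 fun e he hse hte => hloop e he (hse.trans hte.symm)
  classical
  rw [Finset.filter_or, Finset.card_union_of_disjoint hdisj, card_filter_eq_one_of_bijOn hs hv,
    card_filter_eq_one_of_bijOn ht hv]

end OrientedChordlessCycle

/-- The vertices `x 1, …, x (m + 1)` of a path with `m` arrows. -/
def pathVertices {V : Type*} [DecidableEq V] (m : ℕ) (x : ℕ → V) : Finset V :=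
  (Finset.Icc 1 (m + 1)).image x

/-- The arrows `p 1, …, p m` of a path, together with the arrow `η` closing it up. -/
def closedPathArrows {A : Type*} [DecidableEq A] (m : ℕ) (p : ℕ → A) (η : A) : Finset A :=
  insert η ((Finset.Icc 1 m).image p)

/-- A path `x 1 → x 2 → ⋯ → x (m + 1)` with arrows `p 1, …, p m` and pairwise distinct vertices,
closed up by an arrow `η : x (m + 1) → x 1`. The sequences `x` and `p` are indexed by all of `ℕ`;
their values at other indices are irrelevant. -/
structure IsClosedPath {V A : Type*} (s t : A → V) (m : ℕ) (x : ℕ → V) (p : ℕ → A) (η : A) :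
    Prop where
  injOn : Set.InjOn x (Finset.Icc 1 (m + 1))
  source : ∀ i ∈ Finset.Icc 1 m, s (p i) = x i
  target : ∀ i ∈ Finset.Icc 1 m, t (p i) = x (i + 1)
  source_closing : s η = x (m + 1)
  target_closing : t η = x 1

namespace IsClosedPath

variable {V A : Type*} {s t : A → V} {m n : ℕ} {x y : ℕ → V} {p q : ℕ → A} {η : A}

lemma injOn_arrows (h : IsClosedPath s t m x p η) : Set.InjOn p (Finset.Icc 1 m) := by
  intro i hi j hj hij
  have hx : x i = x j := by rw [← h.source i hi, ← h.source j hj, hij]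
  simp only [Finset.coe_Icc, Set.mem_Icc] at hi hj
  exact h.injOn (by simp; omega) (by simp; omega) hx

lemma card_pathVertices [DecidableEq V] (h : IsClosedPath s t m x p η) :
    (pathVertices m x).card = m + 1 := by
  rw [pathVertices, Finset.card_image_of_injOn h.injOn, Nat.card_Icc, Nat.add_sub_cancel]

lemma arrow_mem_fullArrows [DecidableEq V] [Fintype A] (h : IsClosedPath s t m x p η) {i : ℕ}
    (hi : i ∈ Finset.Icc 1 m) : p i ∈ fullArrows s t (pathVertices m x) := by
  rw [mem_fullArrows, h.source i hi, h.target i hi]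
  rw [Finset.mem_Icc] at hi
  exact ⟨Finset.mem_image_of_mem x (Finset.mem_Icc.2 (by omega)),
    Finset.mem_image_of_mem x (Finset.mem_Icc.2 (by omega))⟩

lemma reflTransGen_adjOn [DecidableEq V] [Fintype A] (h : IsClosedPath s t m x p η) {u : V}
    (hu : u ∈ pathVertices m x) :
    Relation.ReflTransGen (adjOn s t (pathVertices m x)) (x 1) u := by
  obtain ⟨i, hi, rfl⟩ := Finset.mem_image.1 hu
  obtain ⟨hi1, him⟩ := Finset.mem_Icc.1 hi
  clear hi hu
  induction i, hi1 using Nat.le_induction with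
  | base => exact .refl
  | succ k hk ih =>
    have hkm : k ∈ Finset.Icc 1 m := Finset.mem_Icc.2 (by omega)
    exact (ih (by omega)).tail
      ⟨p k, h.arrow_mem_fullArrows hkm, Or.inl ⟨h.source k hkm, h.target k hkm⟩⟩

lemma arrow_notMem_fullArrows [DecidableEq V] [Fintype A] (h : IsClosedPath s t m x p η)
    (hm : 2 ≤ m) {S : Finset V} (hinner : ∀ i ∈ Finset.Icc 2 m, x i ∉ S) {i : ℕ}
    (hi : i ∈ Finset.Icc 1 m) : p i ∉ fullArrows s t S := by
  rw [mem_fullArrows, h.source i hi, h.target i hi]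
  rintro ⟨hsource, htarget⟩
  rw [Finset.mem_Icc] at hi
  rcases hi.1.eq_or_lt with rfl | hi1
  · exact hinner 2 (Finset.mem_Icc.2 ⟨le_rfl, hm⟩) htarget
  · exact hinner i (Finset.mem_Icc.2 ⟨hi1, hi.2⟩) hsource

variable [DecidableEq A]

lemma closing_notMem_image (h : IsClosedPath s t m x p η) :
    η ∉ (Finset.Icc 1 m).image p := by
  intro hη
  obtain ⟨i, hi, rfl⟩ := Finset.mem_image.1 hη
  have hx : x (i + 1) = x 1 := by rw [← h.target i hi, h.target_closing]
  rw [Finset.mem_Icc] at hi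
  have := h.injOn (by simp; omega) (by simp) hx
  omega

lemma card_closedPathArrows (h : IsClosedPath s t m x p η) :
    (closedPathArrows m p η).card = m + 1 := by
  rw [closedPathArrows, Finset.card_insert_of_notMem h.closing_notMem_image,
    Finset.card_image_of_injOn h.injOn_arrows, Nat.card_Icc, Nat.add_sub_cancel]

lemma source_ne_target (h : IsClosedPath s t m x p η) (hm : 1 ≤ m) {e : A}
    (he : e ∈ closedPathArrows m p η) : s e ≠ t e := by
  intro hst
  rcases Finset.mem_insert.1 he with rfl | he
  · rw [h.source_closing, h.target_closing] at hst
    have := h.injOn (by simp) (by simp) hst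
    omega
  · obtain ⟨i, hi, rfl⟩ := Finset.mem_image.1 he
    rw [h.source i hi, h.target i hi] at hst
    rw [Finset.mem_Icc] at hi
    have := h.injOn (by simp; omega) (by simp; omega) hst
    omega

variable [DecidableEq V]

lemma image_source (h : IsClosedPath s t m x p η) :
    (closedPathArrows m p η).image s = pathVertices m x := by
  rw [closedPathArrows, pathVertices, Finset.image_insert, h.source_closing, Finset.image_image,
    ← Finset.insert_Icc_right_eq_Icc_add_one (by omega), Finset.image_insert]
  exact congrArg _ (Finset.image_congr h.source)

lemma image_target (h : IsClosedPath s t m x p η) :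
    (closedPathArrows m p η).image t = pathVertices m x := by
  rw [closedPathArrows, pathVertices, Finset.image_insert, h.target_closing, Finset.image_image,
    ← Finset.insert_Icc_add_one_left_eq_Icc (a := 1) (b := m + 1) (by omega), Finset.image_insert,
    ← Finset.image_add_right_Icc, Finset.image_image]
  exact congrArg _ (Finset.image_congr h.target)

lemma bijOn_source (h : IsClosedPath s t m x p η) :
    Set.BijOn s (closedPathArrows m p η) (pathVertices m x) := by
  rw [← h.image_source, Finset.coe_image]
  refine Set.InjOn.bijOn_image (Finset.injOn_of_card_image_eq ?_)
  rw [h.image_source, h.card_pathVertices, h.card_closedPathArrows]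

lemma bijOn_target (h : IsClosedPath s t m x p η) :
    Set.BijOn t (closedPathArrows m p η) (pathVertices m x) := by
  rw [← h.image_target, Finset.coe_image]
  refine Set.InjOn.bijOn_image (Finset.injOn_of_card_image_eq ?_)
  rw [h.image_target, h.card_pathVertices, h.card_closedPathArrows]

variable [Fintype A]

lemma closedPathArrows_subset_fullArrows (h : IsClosedPath s t m x p η) :
    closedPathArrows m p η ⊆ fullArrows s t (pathVertices m x) := fun _ he =>
  mem_fullArrows.2 ⟨h.bijOn_source.mapsTo he, h.bijOn_target.mapsTo he⟩

lemma isOrientedChordlessCycle (h : IsClosedPath s t m x p η) (hm : 1 ≤ m)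
    (hfull : fullArrows s t (pathVertices m x) = closedPathArrows m p η) :
    IsOrientedChordlessCycle s t (pathVertices m x) := by
  refine isOrientedChordlessCycle_of_bijOn (r := x 1)
    (Finset.mem_image_of_mem x (by simp)) (fun u hu => h.reflTransGen_adjOn hu) ?_ ?_ ?_
  all_goals rw [hfull]
  exacts [h.bijOn_source, h.bijOn_target, fun e he => h.source_ne_target hm he]

lemma cut_dichotomy (h : IsClosedPath s t m x p η) (hm : 1 ≤ m)
    (hfull : fullArrows s t (pathVertices m x) = closedPathArrows m p η)
    {Δ : Finset A} (hΔ : IsAdmissibleCut s t Δ) :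
    (η ∈ Δ ∧ ∀ i ∈ Finset.Icc 1 m, p i ∉ Δ) ∨
      (η ∉ Δ ∧ ((Finset.Icc 1 m).filter fun i => p i ∈ Δ).card = 1) := by
  have hcut := hΔ _ (h.isOrientedChordlessCycle hm hfull)
  rw [hfull] at hcut
  exact (card_filter_mem_insert_image_eq_one_iff h.injOn_arrows h.closing_notMem_image Δ).1 hcut

lemma fullArrows_eq (h : IsClosedPath s t m x p η) (h' : IsClosedPath s t n y q η) (hn : 2 ≤ n)
    (hinner : ∀ j ∈ Finset.Icc 2 n, y j ∉ pathVertices m x)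
    (hfull : fullArrows s t (pathVertices m x) ⊆
      closedPathArrows m p η ∪ closedPathArrows n q η) :
    fullArrows s t (pathVertices m x) = closedPathArrows m p η := by
  refine subset_antisymm (fun e he => ?_) h.closedPathArrows_subset_fullArrows
  rcases Finset.mem_union.1 (hfull he) with hep | heq
  · exact hep
  rcases Finset.mem_insert.1 heq with rfl | heq
  · exact Finset.mem_insert_self _ _
  · obtain ⟨j, hj, rfl⟩ := Finset.mem_image.1 heq
    exact absurd he (h'.arrow_notMem_fullArrows hn hinner hj)

end IsClosedPath

/-- The quiver `G(a,b)` sits as a full subquiver in the quiver with source map `s` and target map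
`t`: its upper path has the vertices `v 1, …, v (a + 1)` and the arrows `up 1, …, up a`, and its
lower path has the inner vertices `w 2, …, w b` and the arrows `lo 1, …, lo b`. -/
structure IsFullG {V A : Type*} [DecidableEq V] (s t : A → V) (a b : ℕ) (v w : ℕ → V)
    (up lo : ℕ → A) (η : A) : Prop where
  two_le_upper : 2 ≤ a
  two_le_lower : 2 ≤ b
  upper_injOn : ∀ i ∈ Finset.Icc 1 (a + 1), ∀ j ∈ Finset.Icc 1 (a + 1), v i = v j → i = j
  lower_injOn : ∀ i ∈ Finset.Icc 2 b, ∀ j ∈ Finset.Icc 2 b, w i = w j → i = j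
  upper_ne_lower : ∀ i ∈ Finset.Icc 1 (a + 1), ∀ j ∈ Finset.Icc 2 b, v i ≠ w j
  upper_arrow : ∀ i ∈ Finset.Icc 1 a, s (up i) = v i ∧ t (up i) = v (i + 1)
  lower_first : s (lo 1) = v 1 ∧ t (lo 1) = w 2
  lower_arrow : ∀ j ∈ Finset.Icc 2 (b - 1), s (lo j) = w j ∧ t (lo j) = w (j + 1)
  lower_last : s (lo b) = w b ∧ t (lo b) = v (a + 1)
  closing : s η = v (a + 1) ∧ t η = v 1
  full : ∀ e : A,
    s e ∈ (Finset.Icc 1 (a + 1)).image v ∪ (Finset.Icc 2 b).image w →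
    t e ∈ (Finset.Icc 1 (a + 1)).image v ∪ (Finset.Icc 2 b).image w →
    e = η ∨ (∃ i ∈ Finset.Icc 1 a, e = up i) ∨ (∃ j ∈ Finset.Icc 1 b, e = lo j)

/-- All vertices of the lower path of `G(a,b)`, numbered from `1` to `b + 1`: the inner vertices
`w 2, …, w b` between the end points `v 1` and `v (a + 1)` of the upper path. -/
def lowerVertex {V : Type*} (a b : ℕ) (v w : ℕ → V) (j : ℕ) : V :=
  if j = 1 then v 1 else if j = b + 1 then v (a + 1) else w j

section LowerVertex

variable {V : Type*} {a b : ℕ} {v w : ℕ → V}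

lemma lowerVertex_one : lowerVertex a b v w 1 = v 1 := if_pos rfl

lemma lowerVertex_last (hb : b ≠ 0) : lowerVertex a b v w (b + 1) = v (a + 1) := by
  simp [lowerVertex, hb]

lemma lowerVertex_inner {j : ℕ} (hj : j ∈ Finset.Icc 2 b) : lowerVertex a b v w j = w j := by
  rw [Finset.mem_Icc] at hj
  rw [lowerVertex, if_neg (by omega), if_neg (by omega)]

lemma pathVertices_lowerVertex [DecidableEq V] (hb : b ≠ 0) :
    pathVertices b (lowerVertex a b v w) =
      insert (v 1) (insert (v (a + 1)) ((Finset.Icc 2 b).image w)) := by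
  have hIcc : Finset.Icc 1 (b + 1) = insert 1 (insert (b + 1) (Finset.Icc 2 b)) := by
    ext j
    simp only [Finset.mem_insert, Finset.mem_Icc]
    omega
  rw [pathVertices, hIcc, Finset.image_insert, Finset.image_insert, lowerVertex_one,
    lowerVertex_last hb]
  congr 2
  exact Finset.image_congr fun j hj => lowerVertex_inner hj

end LowerVertex

namespace IsFullG

variable {V A : Type*} [DecidableEq V] {s t : A → V} {a b : ℕ} {v w : ℕ → V} {up lo : ℕ → A}
  {η : A}

lemma upper_isClosedPath (h : IsFullG s t a b v w up lo η) : IsClosedPath s t a v up η where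
  injOn i hi j hj := h.upper_injOn i hi j hj
  source i hi := (h.upper_arrow i hi).1
  target i hi := (h.upper_arrow i hi).2
  source_closing := h.closing.1
  target_closing := h.closing.2

lemma upper_ends_ne (h : IsFullG s t a b v w up lo η) : v 1 ≠ v (a + 1) := fun hv => by
  have := h.two_le_upper
  have := h.upper_injOn 1 (by simp) (a + 1) (by simp) hv
  omega

lemma upper_notMem_image_lower (h : IsFullG s t a b v w up lo η) {i : ℕ}
    (hi : i ∈ Finset.Icc 1 (a + 1)) : v i ∉ (Finset.Icc 2 b).image w := fun hmem => by
  obtain ⟨j, hj, hw⟩ := Finset.mem_image.1 hmem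
  exact h.upper_ne_lower i hi j hj hw.symm

lemma lowerVertex_injOn (h : IsFullG s t a b v w up lo η) :
    Set.InjOn (lowerVertex a b v w) (Finset.Icc 1 (b + 1)) := by
  have hb := h.two_le_lower
  have hfirst : v 1 ∉ insert (v (a + 1)) ((Finset.Icc 2 b).image w) := by
    rw [Finset.mem_insert, not_or]
    exact ⟨h.upper_ends_ne, h.upper_notMem_image_lower (by simp)⟩
  have hlast : v (a + 1) ∉ (Finset.Icc 2 b).image w := h.upper_notMem_image_lower (by simp)
  have hinner : ((Finset.Icc 2 b).image w).card = (Finset.Icc 2 b).card :=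
    Finset.card_image_of_injOn fun i hi j hj => h.lower_injOn i hi j hj
  refine Finset.injOn_of_card_image_eq ?_
  rw [← pathVertices, pathVertices_lowerVertex (by omega), Finset.card_insert_of_notMem hfirst,
    Finset.card_insert_of_notMem hlast, hinner, Nat.card_Icc, Nat.card_Icc]
  omega

lemma lower_source (h : IsFullG s t a b v w up lo η) {j : ℕ} (hj : j ∈ Finset.Icc 1 b) :
    s (lo j) = lowerVertex a b v w j := by
  obtain ⟨hj1, hjb⟩ := Finset.mem_Icc.1 hj
  rcases hj1.eq_or_lt with rfl | hj1
  · rw [h.lower_first.1, lowerVertex_one]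
  rw [lowerVertex_inner (Finset.mem_Icc.2 ⟨hj1, hjb⟩)]
  rcases hjb.eq_or_lt with rfl | hjb
  · exact h.lower_last.1
  · exact (h.lower_arrow j (Finset.mem_Icc.2 (by omega))).1

lemma lower_target (h : IsFullG s t a b v w up lo η) {j : ℕ} (hj : j ∈ Finset.Icc 1 b) :
    t (lo j) = lowerVertex a b v w (j + 1) := by
  obtain ⟨hj1, hjb⟩ := Finset.mem_Icc.1 hj
  rcases hjb.eq_or_lt with rfl | hjb
  · rw [h.lower_last.2, lowerVertex_last (by omega)]
  rw [lowerVertex_inner (Finset.mem_Icc.2 (by omega))]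
  rcases hj1.eq_or_lt with rfl | hj1
  · exact h.lower_first.2
  · exact (h.lower_arrow j (Finset.mem_Icc.2 (by omega))).2

lemma lower_isClosedPath (h : IsFullG s t a b v w up lo η) :
    IsClosedPath s t b (lowerVertex a b v w) lo η where
  injOn := h.lowerVertex_injOn
  source _ hj := h.lower_source hj
  target _ hj := h.lower_target hj
  source_closing := by
    have := h.two_le_lower
    rw [h.closing.1, lowerVertex_last (by omega)]
  target_closing := by rw [h.closing.2, lowerVertex_one]

lemma lower_inner_notMem_upper (h : IsFullG s t a b v w up lo η) {j : ℕ}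
    (hj : j ∈ Finset.Icc 2 b) : lowerVertex a b v w j ∉ pathVertices a v := by
  rw [lowerVertex_inner hj]
  intro hmem
  obtain ⟨i, hi, hv⟩ := Finset.mem_image.1 hmem
  exact h.upper_ne_lower i hi j hj hv

lemma upper_inner_notMem_lower (h : IsFullG s t a b v w up lo η) {i : ℕ}
    (hi : i ∈ Finset.Icc 2 a) : v i ∉ pathVertices b (lowerVertex a b v w) := by
  have hb := h.two_le_lower
  rw [Finset.mem_Icc] at hi
  have hi' : i ∈ Finset.Icc 1 (a + 1) := Finset.mem_Icc.2 (by omega)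
  rw [pathVertices_lowerVertex (by omega), Finset.mem_insert, Finset.mem_insert, not_or, not_or]
  refine ⟨fun hv => ?_, fun hv => ?_, h.upper_notMem_image_lower hi'⟩
  · have := h.upper_injOn i hi' 1 (by simp) hv
    omega
  · have := h.upper_injOn i hi' (a + 1) (by simp) hv
    omega

lemma pathVertices_lower_subset (h : IsFullG s t a b v w up lo η) :
    pathVertices b (lowerVertex a b v w) ⊆ pathVertices a v ∪ (Finset.Icc 2 b).image w := by
  have hb := h.two_le_lower
  have hfirst : v 1 ∈ pathVertices a v := Finset.mem_image_of_mem v (by simp)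
  have hlast : v (a + 1) ∈ pathVertices a v := Finset.mem_image_of_mem v (by simp)
  rw [pathVertices_lowerVertex (by omega)]
  exact Finset.insert_subset (Finset.mem_union_left _ hfirst)
    (Finset.insert_subset (Finset.mem_union_left _ hlast) Finset.subset_union_right)

variable [Fintype A] [DecidableEq A]

lemma fullArrows_subset (h : IsFullG s t a b v w up lo η) :
    fullArrows s t (pathVertices a v ∪ (Finset.Icc 2 b).image w) ⊆
      closedPathArrows a up η ∪ closedPathArrows b lo η := by
  intro e he
  obtain ⟨hs, ht⟩ := mem_fullArrows.1 he
  rcases h.full e hs ht with rfl | ⟨i, hi, rfl⟩ | ⟨j, hj, rfl⟩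
  · exact Finset.mem_union_left _ (Finset.mem_insert_self _ _)
  · exact Finset.mem_union_left _ (Finset.mem_insert_of_mem (Finset.mem_image_of_mem up hi))
  · exact Finset.mem_union_right _ (Finset.mem_insert_of_mem (Finset.mem_image_of_mem lo hj))

lemma fullArrows_upper (h : IsFullG s t a b v w up lo η) :
    fullArrows s t (pathVertices a v) = closedPathArrows a up η :=
  h.upper_isClosedPath.fullArrows_eq h.lower_isClosedPath h.two_le_lower
    (fun _ hj => h.lower_inner_notMem_upper hj)
    ((fullArrows_mono Finset.subset_union_left).trans h.fullArrows_subset)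

lemma fullArrows_lower (h : IsFullG s t a b v w up lo η) :
    fullArrows s t (pathVertices b (lowerVertex a b v w)) = closedPathArrows b lo η :=
  h.lower_isClosedPath.fullArrows_eq h.upper_isClosedPath h.two_le_upper
    (fun _ hi => h.upper_inner_notMem_lower hi)
    (by
      rw [Finset.union_comm]
      exact (fullArrows_mono h.pathVertices_lower_subset).trans h.fullArrows_subset)

end IsFullG

theorem stmt_4_general {V A : Type*} [DecidableEq V] [Fintype A] [DecidableEq A] {s t : A → V}
    {Δ : Finset A} (hΔ : IsAdmissibleCut s t Δ) {a b : ℕ} {v w : ℕ → V} {up lo : ℕ → A} {η : A}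
    (h : IsFullG s t a b v w up lo η) :
    (η ∈ Δ ∧ (∀ i ∈ Finset.Icc 1 a, up i ∉ Δ) ∧ (∀ j ∈ Finset.Icc 1 b, lo j ∉ Δ)) ∨
    (η ∉ Δ ∧ ((Finset.Icc 1 a).filter fun i => up i ∈ Δ).card = 1 ∧
      ((Finset.Icc 1 b).filter fun j => lo j ∈ Δ).card = 1) := by
  have hupper := h.upper_isClosedPath.cut_dichotomy (one_le_two.trans h.two_le_upper)
    h.fullArrows_upper hΔ
  have hlower := h.lower_isClosedPath.cut_dichotomy (one_le_two.trans h.two_le_lower)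
    h.fullArrows_lower hΔ
  rcases hupper with ⟨hη, hup⟩ | ⟨hη, hup⟩
  · exact Or.inl ⟨hη, hup, (hlower.resolve_right fun hlo => hlo.1 hη).2⟩
  · exact Or.inr ⟨hη, hup, (hlower.resolve_left fun hlo => hη hlo.1).2⟩

/-- if a finite loopless quiver `Q` with an admissible cut `Δ` contains the
quiver `G(a,b)` as a full subquiver (upper path `v 1 → v 2 → … → v (a+1)`, lower path
`v 1 → w 2 → … → w b → v (a+1)`, and one further arrow `η : v (a+1) → v 1`, with no other
arrows between these vertices), then either `η ∈ Δ` and no arrow of the upper or lower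
path lies in `Δ`, or `η ∉ Δ` and `Δ` contains exactly one arrow of the upper path and
exactly one arrow of the lower path. -/
theorem stmt_4 {V A : Type*} [Fintype V] [DecidableEq V] [Fintype A] [DecidableEq A]
    (s t : A → V) (hnoloop : ∀ a : A, s a ≠ t a)
    (Δ : Finset A) (hΔ : IsAdmissibleCut s t Δ)
    (a b : ℕ) (ha : 2 ≤ a) (hb : 2 ≤ b)
    (v w : ℕ → V)
    -- the vertices `v 1, …, v (a+1), w 2, …, w b` are pairwise distinct
    (hvinj : ∀ i ∈ Finset.Icc 1 (a + 1), ∀ j ∈ Finset.Icc 1 (a + 1), v i = v j → i = j)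
    (hwinj : ∀ i ∈ Finset.Icc 2 b, ∀ j ∈ Finset.Icc 2 b, w i = w j → i = j)
    (hvw : ∀ i ∈ Finset.Icc 1 (a + 1), ∀ j ∈ Finset.Icc 2 b, v i ≠ w j)
    (up lo : ℕ → A) (η : A)
    -- the upper path `v 1 → v 2 → … → v (a+1)`
    (hup : ∀ i ∈ Finset.Icc 1 a, s (up i) = v i ∧ t (up i) = v (i + 1))
    -- the lower path `v 1 → w 2 → … → w b → v (a+1)`
    (hlo1 : s (lo 1) = v 1 ∧ t (lo 1) = w 2)
    (hlomid : ∀ j ∈ Finset.Icc 2 (b - 1), s (lo j) = w j ∧ t (lo j) = w (j + 1))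
    (hlob : s (lo b) = w b ∧ t (lo b) = v (a + 1))
    -- the further arrow `η : v (a+1) → v 1`
    (hη : s η = v (a + 1) ∧ t η = v 1)
    -- no other arrows between these vertices (the subquiver is full)
    (hfull : ∀ e : A,
      s e ∈ (Finset.Icc 1 (a + 1)).image v ∪ (Finset.Icc 2 b).image w →
      t e ∈ (Finset.Icc 1 (a + 1)).image v ∪ (Finset.Icc 2 b).image w →
      e = η ∨ (∃ i ∈ Finset.Icc 1 a, e = up i) ∨ (∃ j ∈ Finset.Icc 1 b, e = lo j)) :
    (η ∈ Δ ∧ (∀ i ∈ Finset.Icc 1 a, up i ∉ Δ) ∧ (∀ j ∈ Finset.Icc 1 b, lo j ∉ Δ)) ∨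
    (η ∉ Δ ∧ ((Finset.Icc 1 a).filter fun i => up i ∈ Δ).card = 1 ∧
      ((Finset.Icc 1 b).filter fun j => lo j ∈ Δ).card = 1) :=
  stmt_4_general hΔ
    ⟨ha, hb, hvinj, hwinj, hvw, hup, hlo1, hlomid, hlob, hη, hfull⟩
end

section
/- Consider the quiver Q with eleven vertices 1, 2, …, 11 and the sixteen arrows α₁: 1 → 2, α₂: 2 → 3, α₃: 3 → 1, γ: 6 → 7, β₁: 2 → 9, β'₁: 9 → 6, δ₁: 7 → 4, δ'₁: 4 → 1, β₂: 3 → 10, β'₂: 10 → 6, δ₂: 7 → 8, δ'₂: 8 → 2, β₃: 1 → 5, β'₃: 5 → 6, δ₃: 7 → 11, δ'₃: 11 → 3. Then Q admits no admissible cut; that is, there is no set of arrows of Q containing exactly one arrow of each oriented chordless cycle of Q. (The oriented chordless cycles of Q are exactly the cycles α₃α₂α₁, δ'ᵢδᵢγβ'ᵢβᵢ for i = 1, 2, 3, and δ'_{i+1}δ_{i+1}γβ'ᵢβᵢ for i = 1, 2, 3, indices taken modulo 3 with αᵢ connecting the outer triangle 1, 2, 3.) -/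
/-- The source map of the quiver of the paper's example: vertices `1, …, 11` are encoded
as `0, …, 10 : Fin 11`, and the sixteen arrows are, in order,
`α₁ : 1→2, α₂ : 2→3, α₃ : 3→1, γ : 6→7, β₁ : 2→9, β'₁ : 9→6, δ₁ : 7→4, δ'₁ : 4→1,
β₂ : 3→10, β'₂ : 10→6, δ₂ : 7→8, δ'₂ : 8→2, β₃ : 1→5, β'₃ : 5→6, δ₃ : 7→11, δ'₃ : 11→3`. -/
def exSource : Fin 16 → Fin 11 :=
  ![0, 1, 2, 5, 1, 8, 6, 3, 2, 9, 6, 7, 0, 4, 6, 10]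

/-- The target map of the quiver of the paper's example. -/
def exTarget : Fin 16 → Fin 11 :=
  ![1, 2, 0, 6, 8, 5, 3, 0, 9, 5, 7, 1, 4, 5, 10, 2]

/-!
The hexagon through `αᵢ, βᵢ, β'ᵢ, γ, δᵢ, δ'ᵢ` and the pentagon through `βᵢ, β'ᵢ, γ, δᵢ₊₁, δ'ᵢ₊₁`
share the path `β'ᵢβᵢ` and the arrow `γ`. Since a cut meets both in exactly one arrow, the number
of its arrows on `δ'ᵢ₊₁δᵢ₊₁` is that on `δ'ᵢδᵢ` plus the number (`0` or `1`) on `αᵢ`. Going once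
around `i = 1, 2, 3` shows that no `αᵢ` is cut, yet the triangle `α₃α₂α₁` must be cut.
-/

open Finset

section General

variable {V A : Type*} [DecidableEq V]

lemma card_filter_incident_eq_add {s t : A → V} {B : Finset A} {v : V}
    (hloop : ∀ a ∈ B, s a ≠ t a) :
    #{a ∈ B | s a = v ∨ t a = v} = #{a ∈ B | s a = v} + #{a ∈ B | t a = v} := by
  classical
  rw [filter_or, card_union_of_disjoint]
  exact disjoint_filter.2 fun a ha hs ht => hloop a ha (hs.trans ht.symm)

lemma card_filter_image_eq_one {ι : Type*} [Fintype ι] [DecidableEq A] {e : ι → A} {f : A → V}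
    (hf : Function.Injective (f ∘ e)) (i : ι) : #{b ∈ univ.image e | f b = f (e i)} = 1 := by
  refine card_eq_one.2 ⟨e i, ?_⟩
  ext b
  simp only [mem_filter, mem_image, mem_univ, true_and, mem_singleton]
  constructor
  · rintro ⟨⟨j, rfl⟩, hj⟩
    exact congrArg e (hf hj)
  · rintro rfl
    exact ⟨⟨i, rfl⟩, rfl⟩

variable [Fintype A] {s t : A → V}

instance adjOn.instSymm (S : Finset V) : Std.Symm (adjOn s t S) :=
  ⟨fun _ _ ⟨a, ha, h⟩ => ⟨a, ha, h.symm⟩⟩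

variable [DecidableEq A] {n : ℕ} {a : Fin (n + 2) → A}

/-- The arrows `a 0, a 1, …, a (n + 1)` form, in this order, an oriented closed path that visits no
vertex twice and has no chord. Indices are cyclic, since addition in `Fin (n + 2)` is modulo
`n + 2`; having at least two arrows excludes loops. -/
structure IsChordlessClosedPath (s t : A → V) (a : Fin (n + 2) → A) : Prop where
  target_eq : ∀ i, t (a i) = s (a (i + 1))
  source_injective : Function.Injective (s ∘ a)
  fullArrows_eq : fullArrows s t (univ.image (s ∘ a)) = univ.image a

namespace IsChordlessClosedPath

lemma injective (h : IsChordlessClosedPath s t a) : Function.Injective a :=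
  h.source_injective.of_comp

lemma target_injective (h : IsChordlessClosedPath s t a) : Function.Injective (t ∘ a) := by
  have ht : t ∘ a = (s ∘ a) ∘ (· + 1) := funext h.target_eq
  exact ht ▸ h.source_injective.comp (add_left_injective 1)

lemma source_ne_target (h : IsChordlessClosedPath s t a) (i : Fin (n + 2)) :
    s (a i) ≠ t (a i) := by
  rw [h.target_eq]
  exact h.source_injective.ne (by simp)

lemma adjOn_add_one (h : IsChordlessClosedPath s t a) (i : Fin (n + 2)) :
    adjOn s t (univ.image (s ∘ a)) (s (a i)) (s (a (i + 1))) :=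
  ⟨a i, h.fullArrows_eq ▸ mem_image_of_mem a (mem_univ i), .inl ⟨rfl, h.target_eq i⟩⟩

lemma reflTransGen_adjOn (h : IsChordlessClosedPath s t a) (i j : Fin (n + 2)) :
    Relation.ReflTransGen (adjOn s t (univ.image (s ∘ a))) (s (a i)) (s (a j)) := by
  have reach (k : Fin (n + 2)) :
      Relation.ReflTransGen (adjOn s t (univ.image (s ∘ a))) (s (a 0)) (s (a k)) := by
    induction k using Fin.induction with
    | zero => exact .refl
    | succ k ih => exact Fin.coeSucc_eq_succ (a := k) ▸ ih.tail (h.adjOn_add_one k.castSucc)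
  exact (Std.Symm.symm _ _ (reach i)).trans (reach j)

end IsChordlessClosedPath

theorem IsChordlessClosedPath.isOrientedChordlessCycle (h : IsChordlessClosedPath s t a) :
    IsOrientedChordlessCycle s t (univ.image (s ∘ a)) := by
  have out_in (i : Fin (n + 2)) :
      #{b ∈ univ.image a | s b = s (a i)} = 1 ∧ #{b ∈ univ.image a | t b = s (a i)} = 1 := by
    refine ⟨card_filter_image_eq_one h.source_injective i, ?_⟩
    have := card_filter_image_eq_one h.target_injective (i - 1)
    rwa [h.target_eq, sub_add_cancel] at this
  have no_loop : ∀ b ∈ univ.image a, s b ≠ t b := by simpa using h.source_ne_target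
  simp only [IsOrientedChordlessCycle, IsChordlessCycle, h.fullArrows_eq, forall_mem_image,
    mem_univ, true_imp_iff, Function.comp_apply]
  refine ⟨⟨univ_nonempty.image _, h.reflTransGen_adjOn, fun i => ?_⟩, out_in⟩
  rw [card_filter_incident_eq_add no_loop, (out_in i).1, (out_in i).2]

theorem IsAdmissibleCut.sum_eq_one {Δ : Finset A} (hΔ : IsAdmissibleCut s t Δ)
    (h : IsChordlessClosedPath s t a) : ∑ i, (if a i ∈ Δ then 1 else 0) = 1 := by
  have hcard := hΔ _ h.isOrientedChordlessCycle
  rwa [h.fullArrows_eq, card_filter, sum_image h.injective.injOn] at hcard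

end General

lemma sum_eq_zero_of_add_eq_comp_perm {ι M : Type*} [Fintype ι] [AddCancelCommMonoid M]
    {f g : ι → M} (σ : Equiv.Perm ι) (h : ∀ i, f i + g i = g (σ i)) : ∑ i, f i = 0 := by
  have hsum : ∑ i, f i + ∑ i, g i = ∑ i, g i := by
    rw [← sum_add_distrib, sum_congr rfl fun i _ => h i, Equiv.sum_comp σ g]
  exact add_eq_right.1 hsum

section Example

/-- The arrows `α₁, α₂, α₃` of the paper's example, indexed from `0` as are all families below. -/
def exα : Fin 3 → Fin 16 := ![0, 1, 2]

/-- The arrow `γ` of the paper's example. -/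
def exγ : Fin 16 := 3

/-- The arrows `β₁, β₂, β₃` of the paper's example. -/
def exβ : Fin 3 → Fin 16 := ![4, 8, 12]

/-- The arrows `β'₁, β'₂, β'₃` of the paper's example. -/
def exβ' : Fin 3 → Fin 16 := ![5, 9, 13]

/-- The arrows `δ₁, δ₂, δ₃` of the paper's example. -/
def exδ : Fin 3 → Fin 16 := ![6, 10, 14]

/-- The arrows `δ'₁, δ'₂, δ'₃` of the paper's example. -/
def exδ' : Fin 3 → Fin 16 := ![7, 11, 15]

lemma isChordlessClosedPath_triangle : IsChordlessClosedPath exSource exTarget exα :=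
  ⟨by decide, by decide, by decide⟩

lemma isChordlessClosedPath_hexagon (i : Fin 3) :
    IsChordlessClosedPath exSource exTarget ![exα i, exβ i, exβ' i, exγ, exδ i, exδ' i] := by
  constructor <;> decide +revert

lemma isChordlessClosedPath_pentagon (i : Fin 3) :
    IsChordlessClosedPath exSource exTarget
      ![exβ i, exβ' i, exγ, exδ (i + 1), exδ' (i + 1)] := by
  constructor <;> decide +revert

end Example

/-- the quiver with eleven vertices and sixteen arrows described above
admits no admissible cut. -/
theorem stmt_5 : ¬ ∃ Δ : Finset (Fin 16), IsAdmissibleCut exSource exTarget Δ := by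
  rintro ⟨Δ, hΔ⟩
  let w (a : Fin 16) : ℕ := if a ∈ Δ then 1 else 0
  have triangle : ∑ i, w (exα i) = 1 := hΔ.sum_eq_one isChordlessClosedPath_triangle
  have hexagon (i : Fin 3) :
      w (exα i) + w (exβ i) + w (exβ' i) + w exγ + w (exδ i) + w (exδ' i) = 1 :=
    (Fin.sum_univ_six _).symm.trans (hΔ.sum_eq_one (isChordlessClosedPath_hexagon i))
  have pentagon (i : Fin 3) :
      w (exβ i) + w (exβ' i) + w exγ + w (exδ (i + 1)) + w (exδ' (i + 1)) = 1 :=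
    (Fin.sum_univ_five _).symm.trans (hΔ.sum_eq_one (isChordlessClosedPath_pentagon i))
  have detour (i : Fin 3) :
      w (exα i) + (w (exδ i) + w (exδ' i)) = w (exδ (i + 1)) + w (exδ' (i + 1)) := by
    linarith [hexagon i, pentagon i]
  have sum_eq_zero : ∑ i, w (exα i) = 0 :=
    sum_eq_zero_of_add_eq_comp_perm (g := fun i => w (exδ i) + w (exδ' i)) (Equiv.addRight 1) detour
  exact zero_ne_one (sum_eq_zero.symm.trans triangle)
end

section
/- Let Q be a finite connected quiver without loops, with at most one arrow between any two vertices (in either direction), in which every chordless cycle is oriented, and which admits a positive definite quasi-Cartan companion. Then Q admits an admissible cut, i.e. there exists a set Δ of arrows of Q containing exactly one arrow of each oriented chordless cycle of Q. -/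
/-- A quasi-Cartan companion of a quiver (with no loops and at most one arrow between
any two vertices): a symmetric integer matrix with `2` on the diagonal, entries of
absolute value `1` at pairs of vertices joined by an arrow, and `0` elsewhere. -/
def IsQuasiCartanCompanion {V A : Type*} (s t : A → V) (M : Matrix V V ℤ) : Prop :=
  (∀ i j, M i j = M j i) ∧ (∀ i, M i i = 2) ∧
  ∀ i j, i ≠ j →
    ((∃ a : A, (s a = i ∧ t a = j) ∨ (s a = j ∧ t a = i)) →
      (M i j = 1 ∨ M i j = -1)) ∧
    ((¬ ∃ a : A, (s a = i ∧ t a = j) ∨ (s a = j ∧ t a = i)) → M i j = 0)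

/-- A symmetric integer matrix is positive definite:
`xᵀ M x > 0` for every nonzero (integer) vector `x`. -/
def PosDefInt {V : Type*} [Fintype V] (M : Matrix V V ℤ) : Prop :=
  ∀ x : V → ℤ, x ≠ 0 → 0 < ∑ i, ∑ j, M i j * x i * x j

open SimpleGraph

section InducedCycles

variable {V W : Type*} {G : SimpleGraph V} {H : SimpleGraph W}

theorem exists_adj_of_preconnected_induce {X K : Set V} (hX : (G.induce X).Preconnected)
    {u w : V} (huX : u ∈ X) (huK : u ∈ K) (hwX : w ∈ X) (hwK : w ∉ K) :
    ∃ a ∈ X, a ∈ K ∧ ∃ b ∈ X, b ∉ K ∧ G.Adj a b := by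
  obtain ⟨p⟩ := hX ⟨u, huX⟩ ⟨w, hwX⟩
  obtain ⟨d, -, hfst, hsnd⟩ := p.exists_boundary_dart (Subtype.val ⁻¹' K) huK hwK
  exact ⟨d.fst, d.fst.2, hfst, d.snd, d.snd.2, hsnd, d.adj⟩

theorem exists_preconnected_induce_sdiff_singleton {K : Set V} (hfin : K.Finite)
    (hK : (G.induce K).Connected) : ∃ k ∈ K, (G.induce (K \ {k})).Preconnected := by
  have := hfin.to_subtype
  obtain ⟨k, hk⟩ := hK.exists_preconnected_induce_compl_singleton_of_finite
  refine ⟨k, k.2, hk.map (H := G.induce (K \ {k.1}))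
    ⟨fun x => ⟨x.1, x.1.2, fun h => x.2 (Subtype.ext h)⟩, id⟩ fun x => ?_⟩
  exact ⟨⟨⟨x, x.2.1⟩, fun h => x.2.2 (congrArg Subtype.val h)⟩, rfl⟩

theorem walk_isChordless_of_length_eq_dist {u v : V} {p : G.Walk u v}
    (hp : p.length = G.dist u v) : p.IsChordless := by
  rw [Walk.isChordless_iff_forall_mem_edges]
  intro x y hx hy hxy
  obtain ⟨i, rfl, hi⟩ := Walk.mem_support_iff_exists_getVert.1 hx
  obtain ⟨j, rfl, hj⟩ := Walk.mem_support_iff_exists_getVert.1 hy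
  wlog hij : i ≤ j generalizing i j
  · rw [Sym2.eq_swap]
    exact this j hj hy i hi hx hxy.symm (le_of_not_ge hij)
  have hshortcut := dist_le ((p.take i).append (.cons hxy (p.drop j)))
  have hne : i ≠ j := fun h => hxy.ne (congrArg p.getVert h)
  obtain rfl : j = i + 1 := by
    simp only [Walk.length_append, Walk.length_cons, Walk.take_length, Walk.drop_length]
      at hshortcut
    omega
  rw [← Walk.mem_edges_toSubgraph]
  exact p.toSubgraph_adj_getVert (by omega)

theorem walk_isChordless_map {u v : V} {p : G.Walk u v} (hp : p.IsChordless) (f : G ↪g H) :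
    (p.map f.toHom).IsChordless := by
  rw [Walk.isChordless_iff_forall_mem_edges, Walk.support_map]
  intro _ _ hx' hy' hxy
  obtain ⟨x, hx, rfl⟩ := List.mem_map.1 hx'
  obtain ⟨y, hy, rfl⟩ := List.mem_map.1 hy'
  rw [Walk.edges_map]
  exact List.mem_map_of_mem (f := Sym2.map f) (hp.mem_edges hx hy (f.map_adj_iff.1 hxy))

/-- `C` is the vertex set of a chordless cycle of `G`: the subgraph induced on `C` consists of the
vertices and edges of a cycle walk. -/
def IsInducedCycle (G : SimpleGraph V) (C : Set V) : Prop :=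
  ∃ (v : V) (p : G.Walk v v), p.IsCycle ∧ p.toSubgraph = (⊤ : G.Subgraph).induce C

theorem walk_isInducedCycle_support {v : V} {p : G.Walk v v} (hp : p.IsCycle)
    (hchord : p.IsChordless) : IsInducedCycle G {w | w ∈ p.support} := by
  refine ⟨v, p, hp, ?_⟩
  rw [← p.verts_toSubgraph]
  exact (Walk.isInduced_toSubgraph.2 hchord).induce_top_verts.symm

theorem isCycle_cons_concat {v u w : V} {p : G.Walk u w} (hp : p.IsPath) (huw : u ≠ w)
    (hv : v ∉ p.support) (hvu : G.Adj v u) (hwv : G.Adj w v) :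
    (Walk.cons hvu (p.concat hwv)).IsCycle := by
  refine (Walk.cons_isCycle_iff _ _).2 ⟨hp.concat hv hwv, ?_⟩
  rw [Walk.edges_concat, List.concat_eq_append, List.mem_append, List.mem_singleton, not_or]
  refine ⟨fun h => hv (p.fst_mem_support_of_mem_edges h), fun h => ?_⟩
  rw [Sym2.eq_swap, Sym2.congr_left] at h
  exact huw h

theorem isInducedCycle_insert_of_isPath {v u w : V} {p : G.Walk u w} (hp : p.IsPath)
    (hchord : p.IsChordless) (huw : u ≠ w) (hv : v ∉ p.support)
    (hadj : ∀ x ∈ p.support, G.Adj v x ↔ x = u ∨ x = w) :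
    IsInducedCycle G (insert v {x | x ∈ p.support}) := by
  have hvu : G.Adj v u := (hadj u p.start_mem_support).2 (.inl rfl)
  have hwv : G.Adj w v := ((hadj w p.end_mem_support).2 (.inr rfl)).symm
  have hsupp : ∀ x, x ∈ (Walk.cons hvu (p.concat hwv)).support ↔ x = v ∨ x ∈ p.support := by
    intro x
    simp only [Walk.support_cons, Walk.support_concat, List.mem_cons, List.mem_append,
      List.not_mem_nil, or_false]
    tauto
  have hedges : ∀ e, e ∈ (Walk.cons hvu (p.concat hwv)).edges ↔
      e = s(v, u) ∨ e ∈ p.edges ∨ e = s(w, v) := by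
    intro e
    simp only [Walk.edges_cons, Walk.edges_concat, List.concat_eq_append, List.mem_cons,
      List.mem_append, List.not_mem_nil, or_false]
  have hvedge : ∀ x ∈ p.support, G.Adj v x →
      s(v, x) ∈ (Walk.cons hvu (p.concat hwv)).edges := by
    intro x hx hvx
    rcases (hadj x hx).1 hvx with rfl | rfl
    · exact (hedges _).2 (.inl rfl)
    · exact (hedges _).2 (.inr (.inr Sym2.eq_swap))
  have hset : insert v {x | x ∈ p.support} =
      {x | x ∈ (Walk.cons hvu (p.concat hwv)).support} := Set.ext fun x => (hsupp x).symm
  rw [hset]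
  refine walk_isInducedCycle_support (isCycle_cons_concat hp huw hv hvu hwv)
    (Walk.isChordless_iff_forall_mem_edges.2 ?_)
  intro x y hx hy hxy
  rcases (hsupp x).1 hx with rfl | hxp <;> rcases (hsupp y).1 hy with rfl | hyp
  · exact (hxy.ne rfl).elim
  · exact hvedge y hyp hxy
  · exact Sym2.eq_swap ▸ hvedge x hxp hxy.symm
  · exact (hedges _).2 (.inr (.inl (hchord.mem_edges hxp hyp hxy)))

theorem exists_isInducedCycle_of_neighborSet_inter_eq_pair {T : Set V} {v u w : V}
    (hT : (G.induce T).Preconnected) (hv : v ∉ T) (huw : u ≠ w)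
    (hN : G.neighborSet v ∩ T = {u, w}) :
    ∃ C, IsInducedCycle G C ∧ v ∈ C ∧ u ∈ C ∧ w ∈ C := by
  have hu : u ∈ G.neighborSet v ∩ T := hN ▸ Set.mem_insert u {w}
  have hw : w ∈ G.neighborSet v ∩ T := hN ▸ Set.mem_insert_of_mem u rfl
  obtain ⟨p, hp, hpdist⟩ := (hT ⟨u, hu.2⟩ ⟨w, hw.2⟩).exists_path_of_dist
  let q : G.Walk u w := p.map (Embedding.induce T).toHom
  have hqT : ∀ x ∈ q.support, x ∈ T := by
    intro x hx
    obtain ⟨x, -, rfl⟩ := List.mem_map.1 (Walk.support_map _ p ▸ hx)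
    exact x.2
  refine ⟨_, isInducedCycle_insert_of_isPath (p := q)
    (hp.map (Embedding.induce (G := G) T).injective)
    (walk_isChordless_map (walk_isChordless_of_length_eq_dist hpdist) (Embedding.induce T))
    huw (fun h => hv (hqT v h)) fun x hx => ?_,
    Set.mem_insert _ _, .inr q.start_mem_support, .inr q.end_mem_support⟩
  rw [← G.mem_neighborSet, ← and_iff_left (a := x ∈ _) (hqT x hx), ← Set.mem_inter_iff, hN]
  rfl

namespace IsInducedCycle

variable {C D : Set V}

theorem finite (hC : IsInducedCycle G C) : C.Finite := by
  obtain ⟨v, p, -, hp⟩ := hC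
  rw [← (⊤ : G.Subgraph).induce_verts C, ← hp, p.verts_toSubgraph]
  exact p.support.finite_toSet

theorem connected (hC : IsInducedCycle G C) : (G.induce C).Connected := by
  obtain ⟨v, p, -, hp⟩ := hC
  exact connected_induce_iff.2 (hp ▸ p.toSubgraph_connected)

theorem ncard_neighborSet_inter (hC : IsInducedCycle G C) {c : V} (hc : c ∈ C) :
    (G.neighborSet c ∩ C).ncard = 2 := by
  obtain ⟨v, p, hp, hpC⟩ := hC
  have hcp : c ∈ p.support := by
    rw [← p.mem_verts_toSubgraph, hpC]
    exact hc
  rw [← hp.ncard_neighborSet_toSubgraph_eq_two hcp, hpC]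
  congr 1
  ext x
  simp [hc, and_comm]

theorem exists_neighborSet_inter_eq_pair (hC : IsInducedCycle G C) {c : V} (hc : c ∈ C) :
    ∃ u w, u ≠ w ∧ G.neighborSet c ∩ C = {u, w} :=
  Set.ncard_eq_two.1 (hC.ncard_neighborSet_inter hc)

theorem subset_support (hC : IsInducedCycle G C) : C ⊆ G.support := by
  intro c hc
  obtain ⟨u, _, -, hN⟩ := hC.exists_neighborSet_inter_eq_pair hc
  have hu : u ∈ G.neighborSet c ∩ C := hN ▸ Set.mem_insert _ _
  exact ⟨u, hu.1⟩

theorem eq_of_subset (hC : IsInducedCycle G C) (hD : IsInducedCycle G D) (hDC : D ⊆ C) :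
    D = C := by
  by_contra hne
  obtain ⟨x, hxC, hxD⟩ := Set.exists_of_ssubset (hDC.ssubset_of_ne hne)
  obtain ⟨⟨d, hd⟩⟩ := hD.connected.nonempty
  obtain ⟨a, haC, haD, b, hbC, hbD, hab⟩ :=
    exists_adj_of_preconnected_induce hC.connected.preconnected (hDC hd) hd hxC hxD
  have hlt : G.neighborSet a ∩ D ⊂ G.neighborSet a ∩ C :=
    (Set.ssubset_iff_of_subset (Set.inter_subset_inter_right _ hDC)).2
      ⟨b, ⟨hab, hbC⟩, fun h => hbD h.2⟩
  have := Set.ncard_lt_ncard hlt (hC.finite.inter_of_right _)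
  rw [hD.ncard_neighborSet_inter haD, hC.ncard_neighborSet_inter haC] at this
  exact this.false

theorem exists_isPath_support_eq_sdiff_singleton (hC : IsInducedCycle G C) {c c₁ : V}
    (hc : c ∈ C) (hc₁ : c₁ ∈ C) (hadj : G.Adj c c₁) :
    ∃ (c₂ : V) (q : G.Walk c₁ c₂), q.IsPath ∧ {v | v ∈ q.support} = C \ {c} := by
  classical
  obtain ⟨v, p, hp, hpC⟩ := hC
  have hcp : c ∈ p.support := by
    rw [← p.mem_verts_toSubgraph, hpC]
    exact hc
  have hsub : (p.rotate c hcp).toSubgraph = (⊤ : G.Subgraph).induce C :=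
    (p.toSubgraph_rotate hcp).trans hpC
  obtain ⟨r, hr, rfl, hrC⟩ := (hp.rotate hcp).exists_isCycle_snd_verts_eq (w := c₁)
    (by rw [hsub]; exact ⟨hc, hc₁, hadj⟩)
  rw [hsub, Subgraph.induce_verts, Walk.verts_toSubgraph] at hrC
  have htail := hr.isPath_tail
  refine ⟨_, r.tail.dropLast, htail.dropLast, ?_⟩
  have hnil : ¬ r.tail.Nil := by
    rw [← Walk.length_eq_zero_iff, Walk.length_tail]
    have := hr.three_le_length
    omega
  have hsupp := Walk.support_dropLast_concat hnil
  have hnodup := htail.support_nodup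
  rw [← hsupp, List.nodup_append] at hnodup
  have hrC' : ∀ x, x ∈ r.support ↔ x ∈ C := Set.ext_iff.1 hrC
  ext x
  simp only [← hrC', ← Walk.cons_support_tail hr.not_nil, ← hsupp, Set.mem_ofPred_eq,
    Set.mem_sdiff, Set.mem_singleton_iff, List.mem_cons, List.mem_append, List.not_mem_nil,
    or_false]
  have := hnodup.2.2 x
  grind

theorem preconnected_induce_sdiff_singleton (hC : IsInducedCycle G C) {c : V} (hc : c ∈ C) :
    (G.induce (C \ {c})).Preconnected := by
  obtain ⟨c₁, _, -, hN⟩ := hC.exists_neighborSet_inter_eq_pair hc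
  have hc₁ : c₁ ∈ G.neighborSet c ∩ C := hN ▸ Set.mem_insert _ _
  obtain ⟨_, q, -, hq⟩ := hC.exists_isPath_support_eq_sdiff_singleton hc hc₁.2 hc₁.1
  exact hq ▸ q.connected_induce_support.preconnected

theorem preconnected_induce_sdiff_pair (hC : IsInducedCycle G C) {c c₁ : V} (hc : c ∈ C)
    (hc₁ : c₁ ∈ C) (hadj : G.Adj c c₁) : (G.induce (C \ {c, c₁})).Preconnected := by
  obtain ⟨_, q, hqpath, hq⟩ := hC.exists_isPath_support_eq_sdiff_singleton hc hc₁ hadj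
  have hset : C \ {c, c₁} = {v | v ∈ q.support} \ {c₁} := by
    rw [hq, Set.sdiff_sdiff, Set.singleton_union]
  rw [hset]
  cases q with
  | nil =>
    intro x
    exact (x.2.2 (by simpa using x.2.1)).elim
  | cons h q' =>
    have htail : {v | v ∈ (Walk.cons h q').support} \ {c₁} = {v | v ∈ q'.support} := by
      have := ((Walk.cons_isPath_iff h q').1 hqpath).2
      ext x
      simp only [Walk.support_cons]
      grind
    exact htail ▸ q'.connected_induce_support.preconnected

theorem preconnected_induce_sdiff_of_adj (hC : IsInducedCycle G C) {y y' : V}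
    (hadj : G.Adj y y') : (G.induce (C \ {y, y'})).Preconnected := by
  by_cases hy : y ∈ C
  · by_cases hy' : y' ∈ C
    · exact hC.preconnected_induce_sdiff_pair hy hy' hadj
    · rw [← Set.singleton_union, ← Set.sdiff_sdiff, Set.sdiff_singleton_eq_self fun h => hy' h.1]
      exact hC.preconnected_induce_sdiff_singleton hy
  · rw [← Set.singleton_union, ← Set.sdiff_sdiff, Set.sdiff_singleton_eq_self hy]
    by_cases hy' : y' ∈ C
    · exact hC.preconnected_induce_sdiff_singleton hy'
    · rw [Set.sdiff_singleton_eq_self hy']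
      exact hC.connected.preconnected

end IsInducedCycle

theorem isInducedCycle_iff {C : Set V} (hfin : C.Finite) :
    IsInducedCycle G C ↔
      (G.induce C).Connected ∧ ∀ c ∈ C, (G.neighborSet c ∩ C).ncard = 2 := by
  refine ⟨fun hC => ⟨hC.connected, fun c => hC.ncard_neighborSet_inter⟩, fun ⟨hconn, hdeg⟩ => ?_⟩
  classical
  have := hfin.to_subtype
  have : (G.induce C).LocallyFinite := fun c => Fintype.ofFinite _
  have hncard : ∀ c : C, ((G.induce C).neighborSet c).ncard = 2 := by
    intro c
    rw [← hdeg c c.2, ← Set.ncard_image_of_injective _ Subtype.val_injective]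
    congr 1
    ext x
    simp [and_comm]
  have hcycles : (G.induce C).IsCycles := fun c _ => hncard c
  obtain ⟨v⟩ := hconn.nonempty
  obtain ⟨p, hp, hverts⟩ := hcycles.exists_cycle_toSubgraph_verts_eq_connectedComponentSupp
    (c := (G.induce C).connectedComponentMk v) rfl
    (Set.nonempty_of_ncard_ne_zero (hncard v ▸ two_ne_zero))
  have hmem : ∀ c, c ∈ p.toSubgraph.verts := fun c =>
    hverts ▸ ConnectedComponent.sound (hconn.preconnected c v)
  have htop : p.toSubgraph = ⊤ := by
    ext c d
    · exact iff_of_true (hmem c) trivial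
    · exact hp.adj_toSubgraph_iff_of_isCycles hcycles (hmem c) d
  refine ⟨_, p.map (Embedding.induce C).toHom, hp.map (Embedding.induce (G := G) C).injective, ?_⟩
  rw [Walk.toSubgraph_map, htop]
  ext c d
  · simp
  · simp [Relation.Map, and_comm, and_left_comm]

theorem exists_connected_induce_of_mem {X : Set V} {x : V} (hx : x ∈ X) :
    ∃ K ⊆ X, x ∈ K ∧ (G.induce K).Connected ∧ ∀ a ∈ K, ∀ b ∈ X, G.Adj a b → b ∈ K := by
  let c := (G.induce X).connectedComponentMk ⟨x, hx⟩
  refine ⟨Subtype.val '' c.supp, Subtype.coe_image_subset X c.supp, ⟨⟨x, hx⟩, rfl, rfl⟩, ?_, ?_⟩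
  · refine c.connected_toSimpleGraph.map (H := G.induce (Subtype.val '' c.supp))
      ⟨fun a => ⟨a.1.1, a.1, a.2, rfl⟩, id⟩ ?_
    rintro ⟨_, a, ha, rfl⟩
    exact ⟨⟨a, ha⟩, rfl⟩
  · rintro _ ⟨a, ha, rfl⟩ b hb hab
    exact ⟨⟨b, hb⟩, (c.mem_supp_congr_adj (v := a) (w := ⟨b, hb⟩) hab).1 ha, rfl⟩

theorem IsInducedCycle.exists_isInducedCycle_of_attached {C K : Set V} (hC : IsInducedCycle G C)
    (hK : (G.induce K).Preconnected) (hdisj : Disjoint K C) {y c c' k z : V} (hy : y ∈ C)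
    (hcc' : c ≠ c') (hNC : G.neighborSet y ∩ C = {c, c'}) (hNK : G.neighborSet y ∩ K = {k})
    (hz : z ∈ C \ {y, c}) (hzK : (G.neighborSet z ∩ K).Nonempty) :
    ∃ D, IsInducedCycle G D ∧ y ∈ D ∧ c' ∈ D ∧ k ∈ D := by
  have hc : c ∈ G.neighborSet y ∩ C := hNC ▸ Set.mem_insert c {c'}
  have hc' : c' ∈ G.neighborSet y ∩ C := hNC ▸ Set.mem_insert_of_mem c rfl
  have hk : k ∈ G.neighborSet y ∩ K := hNK ▸ rfl
  obtain ⟨x, hzx, hx⟩ := hzK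
  refine exists_isInducedCycle_of_neighborSet_inter_eq_pair (T := C \ {y, c} ∪ K)
    (connected_induce_union (hC.preconnected_induce_sdiff_of_adj hc.1) hK hz hx hzx).preconnected
    ?_ (hdisj.ne_of_mem hk.2 hc'.2).symm ?_
  · rintro (h | h)
    · exact h.2 (Set.mem_insert y {c})
    · exact hdisj.notMem_of_mem_left h hy
  · rw [Set.inter_union_distrib_left, hNK, ← Set.inter_sdiff_assoc, hNC]
    have := hc'.1.ne'
    grind

/-- At each vertex of each induced cycle of `G`, exactly one of the two neighbours on the cycle
satisfies `D`. If `D v u` says that there is an arrow from `v` to `u`, this is orientedness of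
the induced cycles; `D` need not be an orientation of `G`. -/
def AlternatesOnInducedCycles (G : SimpleGraph V) (D : V → V → Prop) : Prop :=
  ∀ ⦃C⦄, IsInducedCycle G C → ∀ ⦃v u w⦄, v ∈ C → u ∈ C → w ∈ C → G.Adj v u → G.Adj v w → u ≠ w →
    (D v u ↔ ¬ D v w)

namespace AlternatesOnInducedCycles

variable {D : V → V → Prop} {C K S : Set V}

-- Otherwise the two edges of `C` at `y` and the edge `yk` lie pairwise on induced cycles,
-- while `D` cannot alternate between any two of three edges.
theorem exists_adj_of_neighborSet_inter_eq_singleton (hD : AlternatesOnInducedCycles G D)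
    (hC : IsInducedCycle G C) (hK : (G.induce K).Preconnected) (hdisj : Disjoint K C) {y k : V}
    (hy : y ∈ C) (hNK : G.neighborSet y ∩ K = {k}) :
    ∃ y' ∈ C, G.Adj y y' ∧ ∀ z ∈ C, (G.neighborSet z ∩ K).Nonempty → z = y ∨ z = y' := by
  obtain ⟨c, c', hcc', hNC⟩ := hC.exists_neighborSet_inter_eq_pair hy
  have hc : c ∈ G.neighborSet y ∩ C := hNC ▸ Set.mem_insert c {c'}
  have hc' : c' ∈ G.neighborSet y ∩ C := hNC ▸ Set.mem_insert_of_mem c rfl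
  have hk : k ∈ G.neighborSet y ∩ K := hNK ▸ rfl
  by_contra! hnot
  obtain ⟨z, hz, hzK, hzy, hzc⟩ := hnot c hc.2 hc.1
  obtain ⟨z', hz', hzK', hzy', hzc'⟩ := hnot c' hc'.2 hc'.1
  obtain ⟨E, hE, hyE, hcE', hkE⟩ := hC.exists_isInducedCycle_of_attached hK hdisj hy hcc' hNC hNK
    (z := z) ⟨hz, by simp [hzy, hzc]⟩ hzK
  obtain ⟨E', hE', hyE', hcE, hkE'⟩ := hC.exists_isInducedCycle_of_attached hK hdisj hy hcc'.symm
    (hNC.trans (Set.pair_comm c c')) hNK (z := z') ⟨hz', by simp [hzy', hzc']⟩ hzK'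
  have h₁ := hD hC hy hc.2 hc'.2 hc.1 hc'.1 hcc'
  have h₂ := hD hE hyE hcE' hkE hc'.1 hk.1 (hdisj.ne_of_mem hk.2 hc'.2).symm
  have h₃ := hD hE' hyE' hcE hkE' hc.1 hk.1 (hdisj.ne_of_mem hk.2 hc.2).symm
  tauto

theorem exists_adj_of_preconnected (hD : AlternatesOnInducedCycles G D) (hC : IsInducedCycle G C)
    (hfin : K.Finite) (hK : (G.induce K).Preconnected) (hdisj : Disjoint K C) :
    ∃ y ∈ C, ∃ y' ∈ C, G.Adj y y' ∧ ∀ z ∈ C, (G.neighborSet z ∩ K).Nonempty → z = y ∨ z = y' := by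
  induction hn : K.ncard generalizing K with
  | zero =>
    obtain rfl := (Set.ncard_eq_zero hfin).1 hn
    obtain ⟨⟨y, hy⟩⟩ := hC.connected.nonempty
    obtain ⟨y', hy'⟩ : (G.neighborSet y ∩ C).Nonempty :=
      Set.nonempty_of_ncard_ne_zero (hC.ncard_neighborSet_inter hy ▸ two_ne_zero)
    exact ⟨y, hy, y', hy'.2, hy'.1, by simp⟩
  | succ n ih =>
    have hne : K.Nonempty := Set.nonempty_of_ncard_ne_zero (hn ▸ n.succ_ne_zero)
    have := hne.to_subtype
    obtain ⟨k, hk, hKk⟩ := exists_preconnected_induce_sdiff_singleton hfin ⟨hK⟩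
    by_cases hnew : ∃ c ∈ C, G.neighborSet c ∩ K = {k}
    · obtain ⟨y, hy, hNK⟩ := hnew
      exact ⟨y, hy, hD.exists_adj_of_neighborSet_inter_eq_singleton hC hK hdisj hy hNK⟩
    · obtain ⟨y, hy, y', hy', hadj, hN⟩ := ih (hfin.sdiff) hKk (hdisj.mono_left Set.sdiff_subset)
        (by rw [Set.ncard_sdiff_singleton_of_mem hk, hn, Nat.add_sub_cancel])
      refine ⟨y, hy, y', hy', hadj, fun z hz hzK => hN z hz ?_⟩
      rw [← Set.inter_sdiff_assoc]
      exact Set.sdiff_nonempty.2 fun hsub => hnew ⟨z, hz, hzK.subset_singleton_iff.1 hsub⟩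

theorem exists_edge_separation (hD : AlternatesOnInducedCycles G D) (hfin : S.Finite)
    (hC : IsInducedCycle G C) (hCS : C ⊂ S) :
    ∃ S₁ ⊂ S, ∃ S₂ ⊂ S, ∃ y y', S₁ ∩ S₂ ⊆ {y, y'} ∧
      ∀ E ⊆ S, IsInducedCycle G E → E ⊆ S₁ ∨ E ⊆ S₂ := by
  obtain ⟨x, hxS, hxC⟩ := Set.exists_of_ssubset hCS
  obtain ⟨K, hKX, hxK, hK, hKclosed⟩ := exists_connected_induce_of_mem (G := G) (X := S \ C)
    ⟨hxS, hxC⟩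
  have hKS : K ⊆ S := hKX.trans Set.sdiff_subset
  have hdisj : Disjoint K C := Set.disjoint_of_subset_left hKX Set.disjoint_sdiff_left
  obtain ⟨y, hy, y', hy', hadj, hatt⟩ :=
    hD.exists_adj_of_preconnected hC (hfin.subset hKS) hK.preconnected hdisj
  obtain ⟨c, ⟨hyc, hc⟩, hcy'⟩ : ∃ c ∈ G.neighborSet y ∩ C, c ≠ y' :=
    Set.exists_ne_of_one_lt_ncard (hC.ncard_neighborSet_inter hy ▸ one_lt_two) y'
  have hS₁ : K ∪ {y, y'} ⊆ S :=
    Set.union_subset hKS (Set.pair_subset (hCS.subset hy) (hCS.subset hy'))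
  refine ⟨K ∪ {y, y'}, (Set.ssubset_iff_of_subset hS₁).2 ⟨c, hCS.subset hc, ?_⟩,
    S \ K, sdiff_lt hKS (Set.nonempty_iff_ne_empty.1 ⟨x, hxK⟩), y, y',
    fun v hv => hv.1.resolve_left hv.2.2, ?_⟩
  · rintro (h | h | h)
    · exact hdisj.notMem_of_mem_left h hc
    · exact hyc.ne' h
    · exact hcy' h
  · intro E hES hE
    by_contra! hnot
    obtain ⟨w, hwE, hw⟩ := Set.not_subset.1 hnot.1
    obtain ⟨u, huE, hu⟩ := Set.not_subset.1 hnot.2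
    have huK : u ∈ K := not_not.1 fun h => hu ⟨hES huE, h⟩
    obtain ⟨a, -, haK, b, hbE, hbK, hab⟩ := exists_adj_of_preconnected_induce
      (hE.preconnected_induce_sdiff_of_adj hadj)
      ⟨huE, fun h => hdisj.notMem_of_mem_left huK (Set.pair_subset hy hy' h)⟩ huK
      ⟨hwE, fun h => hw (.inr h)⟩ (fun h => hw (.inl h))
    by_cases hbC : b ∈ C
    · exact hbE.2 (hatt b hbC ⟨a, hab.symm, haK⟩)
    · exact hbK (hKclosed a haK b ⟨hES hbE.1, hbC⟩ hab)

end AlternatesOnInducedCycles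

/-- The edges of `G` with both ends in `S`. -/
def inducedEdges (G : SimpleGraph V) (S : Set V) : Set (Sym2 V) :=
  ((⊤ : G.Subgraph).induce S).edgeSet

theorem mk_mem_inducedEdges {S : Set V} {u v : V} :
    s(u, v) ∈ inducedEdges G S ↔ u ∈ S ∧ v ∈ S ∧ G.Adj u v :=
  Iff.rfl

theorem inducedEdges_mono {S T : Set V} (hST : S ⊆ T) : inducedEdges G S ⊆ inducedEdges G T :=
  Subgraph.edgeSet_mono (Subgraph.induce_mono_right hST)

theorem inducedEdges_inter {S T : Set V} :
    inducedEdges G (S ∩ T) = inducedEdges G S ∩ inducedEdges G T := by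
  ext e
  induction e with
  | _ u v =>
    simp only [Set.mem_inter_iff, mk_mem_inducedEdges]
    tauto

theorem eq_of_mem_inducedEdges_of_subset_pair {S : Set V} {y y' : V} (hS : S ⊆ {y, y'})
    {e : Sym2 V} (he : e ∈ inducedEdges G S) : e = s(y, y') := by
  induction e with
  | _ u v =>
    obtain ⟨hu, hv, huv⟩ := mk_mem_inducedEdges.1 he
    have := huv.ne
    rcases hS hu with rfl | rfl <;> rcases hS hv with rfl | rfl <;> simp_all [Sym2.eq_swap]

theorem IsInducedCycle.exists_mem_inducedEdges_ne {C : Set V} (hC : IsInducedCycle G C)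
    (e : Sym2 V) : ∃ e₀ ∈ inducedEdges G C, e₀ ≠ e := by
  obtain ⟨⟨v, hv⟩⟩ := hC.connected.nonempty
  obtain ⟨u, w, huw, hN⟩ := hC.exists_neighborSet_inter_eq_pair hv
  have hu : u ∈ G.neighborSet v ∩ C := hN ▸ Set.mem_insert u {w}
  have hw : w ∈ G.neighborSet v ∩ C := hN ▸ Set.mem_insert_of_mem u rfl
  by_cases h : s(v, u) = e
  · exact ⟨s(v, w), ⟨hv, hw.2, hw.1⟩, fun h' => huw (Sym2.congr_right.1 (h.trans h'.symm))⟩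
  · exact ⟨s(v, u), ⟨hv, hu.2, hu.1⟩, h⟩

/-- `Δ` meets the edge set of every induced cycle of `G` with vertices in `S` exactly once: the
undirected counterpart, relative to `S`, of an admissible cut. -/
def IsCycleTransversal (G : SimpleGraph V) (S : Set V) (Δ : Set (Sym2 V)) : Prop :=
  ∀ ⦃C⦄, C ⊆ S → IsInducedCycle G C → ∃! e, e ∈ inducedEdges G C ∧ e ∈ Δ

theorem isCycleTransversal_univ_iff {Δ : Set (Sym2 V)} :
    IsCycleTransversal G Set.univ Δ ↔ IsCycleTransversal G G.support Δ :=
  ⟨fun h _ _ => h (Set.subset_univ _), fun h _ _ hC => h hC.subset_support hC⟩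

theorem isCycleTransversal_glue {S S₁ S₂ : Set V} {Δ₁ Δ₂ : Set (Sym2 V)}
    (hS : ∀ C ⊆ S, IsInducedCycle G C → C ⊆ S₁ ∨ C ⊆ S₂)
    (h₁ : IsCycleTransversal G S₁ Δ₁) (h₂ : IsCycleTransversal G S₂ Δ₂)
    (hagree : ∀ e ∈ inducedEdges G (S₁ ∩ S₂), e ∈ Δ₁ ↔ e ∈ Δ₂) :
    IsCycleTransversal G S ((inducedEdges G S₁).ite Δ₁ Δ₂) := by
  intro C hCS hC
  rcases hS C hCS hC with hC₁ | hC₂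
  · refine (existsUnique_congr fun e => and_congr_right fun he => ?_).1 (h₁ hC₁ hC)
    simp [Set.ite, inducedEdges_mono hC₁ he]
  · refine (existsUnique_congr fun e => and_congr_right fun he => ?_).1 (h₂ hC₂ hC)
    have hagree' : e ∈ inducedEdges G S₁ → (e ∈ Δ₁ ↔ e ∈ Δ₂) := fun he₁ =>
      hagree e (inducedEdges_inter ▸ ⟨he₁, inducedEdges_mono hC₂ he⟩)
    simp only [Set.ite, Set.mem_union, Set.mem_inter_iff, Set.mem_sdiff]
    tauto

theorem IsInducedCycle.exists_isCycleTransversal_mem_iff {C : Set V} (hC : IsInducedCycle G C)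
    (e : Sym2 V) (b : Prop) : ∃ Δ, IsCycleTransversal G C Δ ∧ (e ∈ Δ ↔ b) := by
  obtain ⟨e₀, he₀, hb⟩ : ∃ e₀ ∈ inducedEdges G C, (e ∈ inducedEdges G C → (e = e₀ ↔ b)) := by
    by_cases h : e ∈ inducedEdges G C ∧ b
    · exact ⟨e, h.1, fun _ => iff_of_true rfl h.2⟩
    · obtain ⟨e₀, he₀, hne⟩ := hC.exists_mem_inducedEdges_ne e
      exact ⟨e₀, he₀, fun he => iff_of_false hne.symm fun hb => h ⟨he, hb⟩⟩
  refine ⟨(inducedEdges G C).ite {e₀} {_x | b}, fun E hEC hE => ?_, ?_⟩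
  · obtain rfl := hC.eq_of_subset hE hEC
    exact ⟨e₀, by simp [Set.ite, he₀], by simp +contextual [Set.ite]⟩
  · simp only [Set.ite, Set.mem_union, Set.mem_inter_iff, Set.mem_sdiff, Set.mem_singleton_iff,
      Set.mem_ofPred_eq]
    tauto

theorem AlternatesOnInducedCycles.exists_isCycleTransversal_mem_iff {D : V → V → Prop}
    (hD : AlternatesOnInducedCycles G D) {S : Set V} (hS : S.Finite) (e : Sym2 V) (b : Prop) :
    ∃ Δ, IsCycleTransversal G S Δ ∧ (e ∈ Δ ↔ b) := by
  induction hn : S.ncard using Nat.strong_induction_on generalizing S e b with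
  | _ n ih =>
    subst hn
    have ih' : ∀ T ⊂ S, ∀ e b, ∃ Δ, IsCycleTransversal G T Δ ∧ (e ∈ Δ ↔ b) := fun T hT e b =>
      ih _ (Set.ncard_lt_ncard hT hS) (hS.subset hT.subset) e b rfl
    by_cases hSC : IsInducedCycle G S
    · exact hSC.exists_isCycleTransversal_mem_iff e b
    by_cases hproper : ∃ C ⊂ S, IsInducedCycle G C
    · obtain ⟨C, hCS, hC⟩ := hproper
      obtain ⟨S₁, hS₁, S₂, hS₂, y, y', hinter, hcover⟩ := hD.exists_edge_separation hS hC hCS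
      obtain ⟨Δ₁, Δ₂, h₁, h₂, hyy', he⟩ : ∃ Δ₁ Δ₂, IsCycleTransversal G S₁ Δ₁ ∧
          IsCycleTransversal G S₂ Δ₂ ∧ (s(y, y') ∈ Δ₁ ↔ s(y, y') ∈ Δ₂) ∧
          (e ∈ (inducedEdges G S₁).ite Δ₁ Δ₂ ↔ b) := by
        by_cases he : e ∈ inducedEdges G S₁
        · obtain ⟨Δ₁, h₁, hb⟩ := ih' S₁ hS₁ e b
          obtain ⟨Δ₂, h₂, hyy'⟩ := ih' S₂ hS₂ s(y, y') (s(y, y') ∈ Δ₁)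
          exact ⟨Δ₁, Δ₂, h₁, h₂, hyy'.symm, by simpa [Set.ite, he] using hb⟩
        · obtain ⟨Δ₂, h₂, hb⟩ := ih' S₂ hS₂ e b
          obtain ⟨Δ₁, h₁, hyy'⟩ := ih' S₁ hS₁ s(y, y') (s(y, y') ∈ Δ₂)
          exact ⟨Δ₁, Δ₂, h₁, h₂, hyy', by simpa [Set.ite, he] using hb⟩
      refine ⟨_, isCycleTransversal_glue hcover h₁ h₂ fun f hf => ?_, he⟩
      rwa [eq_of_mem_inducedEdges_of_subset_pair hinter hf]
    · refine ⟨{_x | b}, fun C hCS hC => (hproper ⟨C, hCS.ssubset_of_ne ?_, hC⟩).elim, Iff.rfl⟩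
      rintro rfl
      exact hSC hC

theorem AlternatesOnInducedCycles.exists_isCycleTransversal_univ {D : V → V → Prop}
    (hD : AlternatesOnInducedCycles G D) (hG : G.support.Finite) :
    ∃ Δ, IsCycleTransversal G Set.univ Δ := by
  rcases isEmpty_or_nonempty (Sym2 V) with _ | ⟨⟨e⟩⟩
  · exact ⟨∅, fun _ _ ⟨v, _⟩ => isEmptyElim s(v, v)⟩
  · obtain ⟨Δ, hΔ, -⟩ := hD.exists_isCycleTransversal_mem_iff hG e True
    exact ⟨Δ, isCycleTransversal_univ_iff.2 hΔ⟩

end InducedCycles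

section Quivers

variable {V A : Type*} {s t : A → V}

/-- The simple graph underlying a quiver with source map `s` and target map `t`: it has an edge
`s(s a, t a)` for every arrow `a` that is not a loop. -/
def underlyingGraph (s t : A → V) : SimpleGraph V :=
  .fromEdgeSet (Set.range fun a => s(s a, t a))

theorem underlyingGraph_adj (hnoloop : ∀ a, s a ≠ t a) {u v : V} :
    (underlyingGraph s t).Adj u v ↔ ∃ a, s(s a, t a) = s(u, v) := by
  rw [underlyingGraph, fromEdgeSet_adj, Set.mem_range, and_iff_left_iff_imp]
  rintro ⟨a, ha⟩ rfl
  rcases Sym2.eq_iff.1 ha with h | h <;> exact hnoloop a (h.1.trans h.2.symm)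

theorem finite_support_underlyingGraph [Finite A] : (underlyingGraph s t).support.Finite := by
  refine ((Set.finite_range s).union (Set.finite_range t)).subset ?_
  rintro u ⟨v, ⟨a, ha⟩, -⟩
  rcases Sym2.eq_iff.1 ha with h | h
  · exact .inl ⟨a, h.1⟩
  · exact .inr ⟨a, h.2⟩

variable [DecidableEq V] [Fintype A]

theorem mk_source_target_mem_inducedEdges (hnoloop : ∀ a, s a ≠ t a) {S : Finset V} {a : A} :
    s(s a, t a) ∈ inducedEdges (underlyingGraph s t) S ↔ a ∈ fullArrows s t S := by
  have hadj : (underlyingGraph s t).Adj (s a) (t a) := (underlyingGraph_adj hnoloop).2 ⟨a, rfl⟩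
  simp [fullArrows, mk_mem_inducedEdges, hadj]

theorem adjOn_iff (hnoloop : ∀ a, s a ≠ t a) {S : Finset V} {u v : V} :
    adjOn s t S u v ↔ u ∈ S ∧ v ∈ S ∧ (underlyingGraph s t).Adj u v := by
  simp only [adjOn, fullArrows, Finset.mem_filter, Finset.mem_univ, true_and,
    underlyingGraph_adj hnoloop, Sym2.eq_iff]
  grind

theorem preconnected_induce_underlyingGraph_iff (hnoloop : ∀ a, s a ≠ t a) {S : Finset V} :
    ((underlyingGraph s t).induce (S : Set V)).Preconnected ↔
      ∀ u ∈ S, ∀ v ∈ S, Relation.ReflTransGen (adjOn s t S) u v := by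
  constructor
  · intro h u hu v hv
    refine ((reachable_iff_reflTransGen _ _).1 (h ⟨u, hu⟩ ⟨v, hv⟩)).lift Subtype.val ?_
    exact fun a b hab => (adjOn_iff hnoloop).2 ⟨a.2, b.2, hab⟩
  · rintro h ⟨u, hu⟩ ⟨v, hv⟩
    have hreach : ∀ w, Relation.ReflTransGen (adjOn s t S) u w → ∀ hw : w ∈ (S : Set V),
        ((underlyingGraph s t).induce (S : Set V)).Reachable ⟨u, hu⟩ ⟨w, hw⟩ := by
      intro w huw
      induction huw with
      | refl => exact fun _ => .rfl
      | tail _ hxw ih =>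
        obtain ⟨hx, -, hadj⟩ := (adjOn_iff hnoloop).1 hxw
        exact fun hw => (ih hx).trans (Adj.reachable (by exact hadj))
    exact hreach v (h u hu v hv) hv

theorem card_incident_fullArrows (hnoloop : ∀ a, s a ≠ t a)
    (hinj : Function.Injective fun a => s(s a, t a)) {S : Finset V} {v : V} (hv : v ∈ S) :
    ((fullArrows s t S).filter fun a => s a = v ∨ t a = v).card =
      ((underlyingGraph s t).neighborSet v ∩ S).ncard := by
  rw [← Set.ncard_coe_finset, ← Set.ncard_image_of_injective _ hinj,
    ← Set.ncard_image_of_injective _ (Sym2.mkEmbedding v).injective]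
  congr 1
  ext e
  constructor
  · rintro ⟨a, ha, rfl⟩
    obtain ⟨haS, hav⟩ := Finset.mem_filter.1 ha
    obtain ⟨hs, ht, hadj⟩ := (mk_source_target_mem_inducedEdges hnoloop).2 haS
    rcases hav with rfl | rfl
    · exact ⟨t a, ⟨hadj, ht⟩, rfl⟩
    · exact ⟨s a, ⟨hadj.symm, hs⟩, Sym2.eq_swap⟩
  · rintro ⟨u, ⟨hadj, hu⟩, rfl⟩
    obtain ⟨a, ha⟩ := (underlyingGraph_adj hnoloop).1 hadj
    refine ⟨a, Finset.mem_filter.2 ⟨(mk_source_target_mem_inducedEdges hnoloop).1 ?_, ?_⟩, ha⟩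
    · exact ha ▸ ⟨hv, hu, hadj⟩
    · exact (Sym2.eq_iff.1 ha).imp And.left And.right

theorem isChordlessCycle_iff_isInducedCycle (hnoloop : ∀ a, s a ≠ t a)
    (hinj : Function.Injective fun a => s(s a, t a)) {S : Finset V} :
    IsChordlessCycle s t S ↔ IsInducedCycle (underlyingGraph s t) S := by
  rw [isInducedCycle_iff S.finite_toSet, connected_iff,
    preconnected_induce_underlyingGraph_iff hnoloop, IsChordlessCycle, Set.nonempty_coe_sort,
    Finset.coe_nonempty, and_comm (b := S.Nonempty), and_assoc]
  refine and_congr_right' (and_congr_right' (forall₂_congr fun v hv => ?_))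
  rw [card_incident_fullArrows hnoloop hinj hv]

theorem alternatesOnInducedCycles_underlyingGraph (hnoloop : ∀ a, s a ≠ t a)
    (hinj : Function.Injective fun a => s(s a, t a))
    (horiented : ∀ S : Finset V, IsChordlessCycle s t S → IsOrientedChordlessCycle s t S) :
    AlternatesOnInducedCycles (underlyingGraph s t) fun v u => ∃ a, s a = v ∧ t a = u := by
  intro C hC v u w hv hu hw hvu hvw huw
  lift C to Finset V using hC.finite
  obtain ⟨-, hcard⟩ := horiented C ((isChordlessCycle_iff_isInducedCycle hnoloop hinj).2 hC)
  have hout := Finset.card_le_one.1 (hcard v hv).1.le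
  have hin := Finset.card_le_one.1 (hcard v hv).2.le
  simp only [fullArrows, Finset.mem_filter, Finset.mem_univ, true_and] at hout hin
  constructor
  · rintro ⟨a, rfl, rfl⟩ ⟨b, hb, rfl⟩
    exact huw (congrArg t (hout a ⟨⟨hv, hu⟩, rfl⟩ b ⟨⟨hb ▸ hv, hw⟩, hb⟩))
  · intro hnot
    obtain ⟨a, ha⟩ := (underlyingGraph_adj hnoloop).1 hvu
    obtain ⟨b, hb⟩ := (underlyingGraph_adj hnoloop).1 hvw
    obtain ⟨rfl, rfl⟩ := (Sym2.eq_iff.1 hb).resolve_left fun h => hnot ⟨b, h⟩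
    refine ⟨a, (Sym2.eq_iff.1 ha).resolve_right fun h => huw ?_⟩
    obtain ⟨rfl, hat⟩ := h
    exact congrArg s (hin a ⟨⟨hu, hat ▸ hv⟩, hat⟩ b ⟨⟨hw, hv⟩, rfl⟩)

theorem isAdmissibleCut_of_isCycleTransversal [DecidableEq A] (hnoloop : ∀ a, s a ≠ t a)
    (hinj : Function.Injective fun a => s(s a, t a)) {Δ : Set (Sym2 V)} [DecidablePred (· ∈ Δ)]
    (hΔ : IsCycleTransversal (underlyingGraph s t) Set.univ Δ) :
    IsAdmissibleCut s t {a | s(s a, t a) ∈ Δ} := by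
  intro S hS
  have hcycle := (isChordlessCycle_iff_isInducedCycle hnoloop hinj).1 hS.1
  obtain ⟨e, ⟨heS, heΔ⟩, huniq⟩ := hΔ (Set.subset_univ (S : Set V)) hcycle
  obtain ⟨a, rfl⟩ : ∃ a, s(s a, t a) = e := by
    induction e with
    | _ u v => exact (underlyingGraph_adj hnoloop).1 heS.2.2
  refine Finset.card_eq_one.2 ⟨a, Finset.eq_singleton_iff_unique_mem.2 ⟨?_, fun b hb => ?_⟩⟩
  · exact Finset.mem_filter.2
      ⟨(mk_source_target_mem_inducedEdges hnoloop).1 heS, by simpa using heΔ⟩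
  · obtain ⟨hbS, hbΔ⟩ := Finset.mem_filter.1 hb
    exact hinj (huniq _ ⟨(mk_source_target_mem_inducedEdges hnoloop).2 hbS, by simpa using hbΔ⟩)

theorem stmt_7_general [DecidableEq A] (s t : A → V) (hnoloop : ∀ a, s a ≠ t a)
    (hsimple : ∀ a b : A, ((s a = s b ∧ t a = t b) ∨ (s a = t b ∧ t a = s b)) → a = b)
    (horiented : ∀ S : Finset V, IsChordlessCycle s t S → IsOrientedChordlessCycle s t S) :
    ∃ Δ : Finset A, IsAdmissibleCut s t Δ := by
  classical
  have hinj : Function.Injective fun a => s(s a, t a) :=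
    fun a b hab => hsimple a b (Sym2.eq_iff.1 hab)
  have hD := alternatesOnInducedCycles_underlyingGraph hnoloop hinj horiented
  obtain ⟨Δ, hΔ⟩ := hD.exists_isCycleTransversal_univ finite_support_underlyingGraph
  exact ⟨_, isAdmissibleCut_of_isCycleTransversal hnoloop hinj hΔ⟩

end Quivers

/-- a finite connected quiver without loops, with at most one arrow between
any two vertices (in either direction), in which every chordless cycle is oriented and
which admits a positive definite quasi-Cartan companion, admits an admissible cut. -/
theorem stmt_7 {V A : Type*} [Fintype V] [DecidableEq V] [Fintype A] [DecidableEq A]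
    (s t : A → V)
    (hnoloop : ∀ a : A, s a ≠ t a)
    (hsimple : ∀ a b : A,
      ((s a = s b ∧ t a = t b) ∨ (s a = t b ∧ t a = s b)) → a = b)
    (hconn : ∀ u v : V,
      Relation.ReflTransGen
        (fun x y => ∃ a : A, (s a = x ∧ t a = y) ∨ (s a = y ∧ t a = x)) u v)
    (horiented : ∀ S : Finset V,
      IsChordlessCycle s t S → IsOrientedChordlessCycle s t S)
    (hQC : ∃ M : Matrix V V ℤ, IsQuasiCartanCompanion s t M ∧ PosDefInt M) :
    ∃ Δ : Finset A, IsAdmissibleCut s t Δ :=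
  stmt_7_general s t hnoloop hsimple horiented
end
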